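/- arXiv:1107.0444 — 4 statements merged into one kernel-verified Lean document; each statement's English description precedes it below -/
import Mathlib

section
/- Let k be a field and I an index set. Let k[[x]] be the ring of formal power series over k and k((x)) the field of formal Laurent series over k, regarded as the fraction field of k[[x]]. Let Υ be the multiplicative submonoid of ∏_{i∈I} k[[x]] consisting of all tuples s = (s_i) such that each s_i is a power of x and s_i = 1 for all but finitely many i ∈ I. Let 𝔸_I be the subring of ∏_{i∈I} k((x)) consisting of all tuples f = (f_i) with f_i ∈ k[[x]] for all but finitely many i ∈ I (the I-adèle ring of k((x))). Then the componentwise inclusion ∏_{i∈I} k[[x]] → 𝔸_I exhibits 𝔸_I as the localization of the ring ∏_{i∈I} k[[x]] at the multiplicative set Υ. -/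
open Filter

variable (k : Type*) [Field k] (I : Type*)

/-- The `I`-adèle ring of `k((x))`: the subring of `∏ i ∈ I, k((x))` of tuples whose
components lie in `k[[x]]` for almost all `i`. -/
noncomputable def adeleSubringLaurent : Subring (I → LaurentSeries k) where
  carrier := {f | ∀ᶠ i in cofinite,
    f i ∈ (algebraMap (PowerSeries k) (LaurentSeries k)).range}
  mul_mem' := by
    intro a b ha hb
    have ha' : ∀ᶠ i in cofinite,
        a i ∈ (algebraMap (PowerSeries k) (LaurentSeries k)).range := ha
    have hb' : ∀ᶠ i in cofinite,
        b i ∈ (algebraMap (PowerSeries k) (LaurentSeries k)).range := hb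
    exact (ha'.and hb').mono fun _ h => mul_mem h.1 h.2
  one_mem' := by
    show ∀ᶠ i in cofinite,
      (1 : I → LaurentSeries k) i ∈ (algebraMap (PowerSeries k) (LaurentSeries k)).range
    exact Eventually.of_forall fun _ => one_mem _
  add_mem' := by
    intro a b ha hb
    have ha' : ∀ᶠ i in cofinite,
        a i ∈ (algebraMap (PowerSeries k) (LaurentSeries k)).range := ha
    have hb' : ∀ᶠ i in cofinite,
        b i ∈ (algebraMap (PowerSeries k) (LaurentSeries k)).range := hb
    exact (ha'.and hb').mono fun _ h => add_mem h.1 h.2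
  zero_mem' := by
    show ∀ᶠ i in cofinite,
      (0 : I → LaurentSeries k) i ∈ (algebraMap (PowerSeries k) (LaurentSeries k)).range
    exact Eventually.of_forall fun _ => zero_mem _
  neg_mem' := by
    intro a ha
    have ha' : ∀ᶠ i in cofinite,
        a i ∈ (algebraMap (PowerSeries k) (LaurentSeries k)).range := ha
    exact ha'.mono fun _ h => neg_mem h

theorem mem_adeleSubringLaurent {f : I → LaurentSeries k} :
    f ∈ adeleSubringLaurent k I ↔ ∀ᶠ i in cofinite,
      f i ∈ (algebraMap (PowerSeries k) (LaurentSeries k)).range :=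
  Iff.rfl

/-- The componentwise inclusion `∏ i, k[[x]] → 𝔸_I`. -/
noncomputable def toAdelesLaurent : (I → PowerSeries k) →+* adeleSubringLaurent k I :=
  RingHom.codRestrict
    (Pi.ringHom fun i => (algebraMap (PowerSeries k) (LaurentSeries k)).comp
      (Pi.evalRingHom (fun _ => PowerSeries k) i))
    (adeleSubringLaurent k I)
    (fun d => (mem_adeleSubringLaurent k I).mpr
      (Eventually.of_forall fun i => ⟨d i, rfl⟩))

/-- The multiplicative set of tuples of power series each of which is a power of `X`,
with almost all components equal to `1`. -/
noncomputable def powersOfXSubmonoid : Submonoid (I → PowerSeries k) where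
  carrier := {s | (∀ i, ∃ n : ℕ, s i = (PowerSeries.X : PowerSeries k) ^ n) ∧
    ∀ᶠ i in cofinite, s i = 1}
  mul_mem' := by
    intro a b ha hb
    have ha' : (∀ i, ∃ n : ℕ, a i = (PowerSeries.X : PowerSeries k) ^ n) ∧
        ∀ᶠ i in cofinite, a i = 1 := ha
    have hb' : (∀ i, ∃ n : ℕ, b i = (PowerSeries.X : PowerSeries k) ^ n) ∧
        ∀ᶠ i in cofinite, b i = 1 := hb
    refine ⟨fun i => ?_, (ha'.2.and hb'.2).mono fun i h => by
      simp [Pi.mul_apply, h.1, h.2]⟩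
    obtain ⟨n, hn⟩ := ha'.1 i
    obtain ⟨nn, hnn⟩ := hb'.1 i
    exact ⟨n + nn, by simp [Pi.mul_apply, hn, hnn, pow_add]⟩
  one_mem' := ⟨fun i => ⟨0, by simp⟩, Eventually.of_forall fun _ => rfl⟩

theorem aux_exists_powerX (f : LaurentSeries k) :
    ∃ (n : ℕ) (p : PowerSeries k),
      (f ∈ (algebraMap (PowerSeries k) (LaurentSeries k)).range → n = 0) ∧
      f * algebraMap (PowerSeries k) (LaurentSeries k) (PowerSeries.X ^ n) =
        algebraMap (PowerSeries k) (LaurentSeries k) p := by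
  by_cases h : f ∈ (algebraMap (PowerSeries k) (LaurentSeries k)).range
  · obtain ⟨p, hp⟩ := h
    exact ⟨0, p, fun _ => rfl, by simp [hp]⟩
  · obtain ⟨⟨p, ⟨_, n, rfl⟩⟩, hp⟩ :=
      IsLocalization.surj (Submonoid.powers (PowerSeries.X : PowerSeries k)) f
    exact ⟨n, p, fun h' => absurd h' h, hp⟩

theorem aux_algebraMap_inj :
    Function.Injective (algebraMap (PowerSeries k) (LaurentSeries k)) :=
  IsFractionRing.injective (PowerSeries k) (LaurentSeries k)

theorem aux_toAdeles_apply (d : I → PowerSeries k) (i : I) :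
    (toAdelesLaurent k I d : I → LaurentSeries k) i =
      algebraMap (PowerSeries k) (LaurentSeries k) (d i) := rfl

/-- For a field `k` and an index set `I`, the `I`-adèle ring `𝔸_I` of the
Laurent series field `k((x))` is the localization of the product ring `∏ i ∈ I, k[[x]]` at the
multiplicative set of tuples that are componentwise powers of `x` and almost everywhere `1`. -/
theorem stmt_2 :
    @IsLocalization (I → PowerSeries k) _ (powersOfXSubmonoid k I)
      (adeleSubringLaurent k I) _ (toAdelesLaurent k I).toAlgebra := by
  letI := (toAdelesLaurent k I).toAlgebra
  have hinj := aux_algebraMap_inj k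
  refine ⟨?_, ?_, ?_⟩
  · rintro ⟨s, hs, hs1⟩
    have hne : ∀ i, algebraMap (PowerSeries k) (LaurentSeries k) (s i) ≠ 0 := by
      intro i h
      obtain ⟨n, hn⟩ := hs i
      rw [map_eq_zero_iff _ hinj, hn] at h
      exact pow_ne_zero n PowerSeries.X_ne_zero h
    refine IsUnit.of_mul_eq_one
      (⟨fun i => (algebraMap (PowerSeries k) (LaurentSeries k) (s i))⁻¹, ?_⟩ :
        adeleSubringLaurent k I) ?_
    · exact hs1.mono fun i h => ⟨1, by simp [h]⟩
    · apply Subtype.ext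
      funext i
      exact mul_inv_cancel₀ (hne i)
  · rintro ⟨f, hf⟩
    choose n p hn hp using fun i => aux_exists_powerX k (f i)
    refine ⟨⟨p, ⟨fun i => PowerSeries.X ^ n i, fun i => ⟨n i, rfl⟩, ?_⟩⟩, ?_⟩
    · exact Eventually.mono hf fun i h => by simp [hn i h]
    · apply Subtype.ext
      funext i
      exact hp i
  · intro a b hab
    refine ⟨1, ?_⟩
    have : a = b := by
      funext i
      exact hinj (congrFun (congrArg Subtype.val hab) i)
    rw [this]
end

section
/- Let k be a field and p(x) ∈ k[x] an irreducible polynomial. Then the (p(x))-adic completion of k[x], that is, the inverse limit of the rings k[x]/(p(x)^n) over n ∈ ℕ, is isomorphic as a ring to the formal power series ring k_{p(x)}[[t]] in one variable t over the residue field k_{p(x)} := k[x]/(p(x)). -/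
section smooth
open MvPolynomial KaehlerDifferential TensorProduct

lemma h1_crit (F A : Type*) [CommRing F] [CommRing A] [Algebra F A] :
    Subsingleton (Algebra.H1Cotangent F A) ↔ ∀ x : MvPolynomial A F,
      aeval (R := F) (id : A → A) x = 0 → (∀ i, aeval (R := F) (id : A → A) (pderiv i x) = 0) →
      x ∈ (RingHom.ker (aeval (R := F) (id : A → A) : MvPolynomial A F →ₐ[F] A).toRingHom) ^ 2 := by
  let : Algebra (MvPolynomial A F) A := (aeval (R := F) (id : A → A)).toRingHom.toAlgebra
  have hmap : ∀ x, algebraMap (MvPolynomial A F) A x = aeval (R := F) (id : A → A) x := fun _ => rfl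
  have : IsScalarTower F (MvPolynomial A F) A := IsScalarTower.of_algebraMap_eq fun r => by
    rw [hmap]; simp
  have hs : Function.Surjective (algebraMap (MvPolynomial A F) A) := fun a => ⟨X a, by simp [hmap]⟩
  rw [← Algebra.FormallySmooth.kerCotangentToTensor_injective_iff (R := F) (P := MvPolynomial A F) hs]
  have key : ∀ x : MvPolynomial A F, ((1 : A) ⊗ₜ[MvPolynomial A F] D F (MvPolynomial A F) x = 0 ↔
      ∀ i, aeval (R := F) (id : A → A) (pderiv i x) = 0) := by
    intro x
    rw [← ((mvPolynomialBasis F A).baseChange A).repr.map_eq_zero_iff, Finsupp.ext_iff]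
    refine forall_congr' fun i => ?_
    simp only [Module.Basis.baseChange_repr_tmul, mvPolynomialBasis_repr_apply,
      Algebra.smul_def, mul_one, hmap, Finsupp.coe_zero, Pi.zero_apply]
  rw [injective_iff_map_eq_zero]
  constructor
  · intro h x hx hd
    have := h (Ideal.toCotangent _ ⟨x, hx⟩) (by
      rw [kerCotangentToTensor_toCotangent]; exact (key x).2 hd)
    rwa [Ideal.toCotangent_eq_zero] at this
  · intro h y hy
    obtain ⟨⟨x, hx⟩, rfl⟩ := Ideal.toCotangent_surjective _ y
    rw [kerCotangentToTensor_toCotangent] at hy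
    rw [Ideal.toCotangent_eq_zero]
    exact h x hx ((key x).1 hy)

lemma formallySmooth_perfect (F L : Type*) [Field F] [Field L] [Algebra F L] [PerfectField F] :
    Algebra.FormallySmooth F L := by
  refine ⟨inferInstance, (h1_crit F L).2 fun x hx hd => ?_⟩
  obtain ⟨E, hfin, hsub⟩ : ∃ E : IntermediateField F L, Algebra.EssFiniteType F E ∧
      (x.vars : Set L) ⊆ E :=
    ⟨IntermediateField.adjoin F (x.vars : Set L),
      IntermediateField.essFiniteType_iff.2 (IntermediateField.fg_adjoin_finset _),
      IntermediateField.subset_adjoin _ _⟩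
  have hE := (h1_crit F E).1 inferInstance
  obtain ⟨y, rfl⟩ := exists_rename_eq_of_vars_subset_range x (Subtype.val : E → L)
    Subtype.val_injective (fun a ha => ⟨⟨a, hsub ha⟩, rfl⟩)
  have hc : ∀ z : MvPolynomial E F, aeval (R := F) (id : L → L) (rename (Subtype.val : E → L) z) =
      (aeval (R := F) (id : E → E) z : E) := by
    intro z
    rw [aeval_rename]
    change _ = E.val _
    rw [← AlgHom.comp_apply]
    congr 1
    ext i
    simp
  have := hE y (by apply Subtype.val_injective; rw [← hc, hx]; rfl) (fun i => by
    apply Subtype.val_injective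
    rw [← hc, ← pderiv_rename Subtype.val_injective, hd]; rfl)
  have h2 := Ideal.mem_map_of_mem (rename (R := F) (Subtype.val : E → L)).toRingHom this
  rw [Ideal.map_pow] at h2
  refine Ideal.pow_right_mono ?_ 2 h2
  rw [Ideal.map_le_iff_le_comap]
  intro z hz
  change aeval (R := F) (id : L → L) (rename (Subtype.val : E → L) z) = 0
  rw [hc]
  have hz' : aeval (R := F) (id : E → E) z = 0 := hz
  rw [hz']; rfl

end smooth

lemma trunc_diff {K S : Type*} [CommRing K] [CommRing S] (g : K →+* S) (a : S) (n : ℕ)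
    (u v : Polynomial K) (h : ∀ m < n, u.coeff m = v.coeff m) :
    u.eval₂ g a - v.eval₂ g a ∈ (Ideal.span {a}) ^ n := by
  rw [Ideal.span_singleton_pow, Ideal.mem_span_singleton, ← Polynomial.eval₂_sub]
  obtain ⟨w, hw⟩ := (Polynomial.X_pow_dvd_iff (n := n) (f := u - v)).2 (fun d hd => by
    simp [h d hd])
  rw [hw, Polynomial.eval₂_mul, Polynomial.eval₂_X_pow]
  exact dvd_mul_right _ _

lemma powerSeries_equiv {K S : Type*} [Field K] [CommRing S] (g : K →+* S) (a : S)
    [IsAdicComplete (Ideal.span {a}) S]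
    (hs : ∀ s : S, ∃ c : K, s - g c ∈ Ideal.span {a}) (ha : ∀ n : ℕ, a ^ n ≠ 0) :
    Nonempty (PowerSeries K ≃+* S) := by
  let I := Ideal.span {a}
  let f : (n : ℕ) → PowerSeries K →+* S ⧸ I ^ n := fun n =>
    { toFun := fun φ => Ideal.Quotient.mk (I ^ n) ((PowerSeries.trunc n φ).eval₂ g a)
      map_one' := by
        rw [← map_one (Ideal.Quotient.mk (I ^ n)), Ideal.Quotient.mk_eq_mk_iff_sub_mem]
        have := trunc_diff g a n (PowerSeries.trunc n 1) 1 (fun m hm => by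
          simp [PowerSeries.coeff_trunc, hm, PowerSeries.coeff_one, Polynomial.coeff_one])
        simpa using this
      map_mul' := fun φ ψ => by
        rw [← map_mul, Ideal.Quotient.mk_eq_mk_iff_sub_mem, ← Polynomial.eval₂_mul]
        refine trunc_diff g a n _ _ fun m hm => ?_
        rw [PowerSeries.coeff_trunc, if_pos hm, PowerSeries.coeff_mul, Polynomial.coeff_mul]
        refine Finset.sum_congr rfl fun x hx => ?_
        have := Finset.HasAntidiagonal.mem_antidiagonal.1 hx
        rw [PowerSeries.coeff_trunc, PowerSeries.coeff_trunc, if_pos (by omega), if_pos (by omega)]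
      map_zero' := by simp
      map_add' := fun φ ψ => by simp [Polynomial.eval₂_add] }
  have hfdef : ∀ n φ, f n φ = Ideal.Quotient.mk (I ^ n) ((PowerSeries.trunc n φ).eval₂ g a) :=
    fun _ _ => rfl
  have hf : ∀ {m n : ℕ} (hle : m ≤ n), (Ideal.Quotient.factorPow I hle).comp (f n) = f m := by
    intro m n hle
    ext φ
    rw [RingHom.comp_apply, hfdef, hfdef]
    refine Ideal.Quotient.mk_eq_mk_iff_sub_mem _ _ |>.2 ?_
    refine trunc_diff g a m _ _ fun d hd => ?_
    rw [PowerSeries.coeff_trunc, PowerSeries.coeff_trunc, if_pos (by omega), if_pos (by omega)]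
  let Φ : PowerSeries K →+* S := IsAdicComplete.liftRingHom I f hf
  have hΦ : ∀ n φ, Φ φ - (PowerSeries.trunc n φ).eval₂ g a ∈ I ^ n := fun n φ => by
    rw [← Ideal.Quotient.mk_eq_mk_iff_sub_mem, IsAdicComplete.mk_liftRingHom, hfdef]
  have hpoly : ∀ q : Polynomial K, Φ (q : PowerSeries K) = q.eval₂ g a := by
    intro q
    rw [← sub_eq_zero]
    refine IsHausdorff.haus (I := I) inferInstance _ fun n => ?_
    rw [SModEq.zero, smul_eq_mul, Ideal.mul_top]
    have h1 := hΦ n q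
    have h2 := trunc_diff g a n (PowerSeries.trunc n (q : PowerSeries K)) q (fun m hm => by
      simp [PowerSeries.coeff_trunc, hm])
    simpa using Ideal.add_mem _ h1 h2
  have hX : Φ PowerSeries.X = a := by
    simpa using hpoly Polynomial.X
  have hC : ∀ c, Φ (PowerSeries.C c) = g c := fun c => by
    simpa using hpoly (Polynomial.C c)
  have hmapI : (Ideal.span {(PowerSeries.X : PowerSeries K)}).map Φ = I := by
    rw [Ideal.map_span, Set.image_singleton, hX]
  refine ⟨RingEquiv.ofBijective Φ ⟨?_, ?_⟩⟩
  · rw [injective_iff_map_eq_zero]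
    intro φ hφ
    by_contra hne
    have hu := (PowerSeries.isUnit_divided_by_X_pow_order hne).map Φ
    have h := congrArg Φ (PowerSeries.X_pow_order_mul_divXPowOrder (f := φ))
    rw [map_mul, map_pow, hX, hφ] at h
    exact ha _ ((hu.mul_left_eq_zero).1 h)
  · have : IsHausdorff ((Ideal.span {(PowerSeries.X : PowerSeries K)}).map Φ) S := by
      rw [hmapI]; infer_instance
    refine surjective_of_mk_map_comp_surjective (I := Ideal.span {(PowerSeries.X : PowerSeries K)}) Φ ?_
    intro y
    obtain ⟨s, rfl⟩ := Ideal.Quotient.mk_surjective y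
    obtain ⟨c, hc⟩ := hs s
    refine ⟨PowerSeries.C c, ?_⟩
    rw [RingHom.comp_apply, hC, eq_comm, Ideal.Quotient.mk_eq_mk_iff_sub_mem, hmapI]
    exact hc

lemma main_aux (F k : Type*) [Field F] [PerfectField F] [Field k] [Algebra F k]
    (p : Polynomial k) (hp : Irreducible p) :
    Nonempty (AdicCompletion (Ideal.span {p}) (Polynomial k) ≃+*
      PowerSeries (Polynomial k ⧸ Ideal.span {p})) := by
  have hmax : (Ideal.span {p}).IsMaximal := PrincipalIdealRing.isMaximal_of_irreducible hp
  let : Field (Polynomial k ⧸ Ideal.span {p}) := Ideal.Quotient.field _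
  have := formallySmooth_perfect F (Polynomial k ⧸ Ideal.span {p})
  obtain ⟨g, hg⟩ := Algebra.FormallySmooth.exists_adicCompletionEvalOneₐ_comp_eq (R := F)
    (I := Ideal.span {p}) (AlgHom.id F (Polynomial k ⧸ Ideal.span {p}))
  have hfg : (Ideal.span {p}).FG := ⟨{p}, by simp⟩
  have hmap : (Ideal.span {p}).map (algebraMap (Polynomial k) (AdicCompletion (Ideal.span {p}) (Polynomial k)))
    = Ideal.span {algebraMap _ _ p} := by rw [Ideal.map_span, Set.image_singleton]
  have hker := AdicCompletion.ker_evalOneₐ_eq_map (Ideal.span {p}) hfg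
  rw [hmap] at hker
  have : IsAdicComplete (Ideal.span {algebraMap (Polynomial k) (AdicCompletion (Ideal.span {p}) (Polynomial k)) p})
      (AdicCompletion (Ideal.span {p}) (Polynomial k)) := by
    rw [← hmap, IsAdicComplete.map_algebraMap_iff]
    exact AdicCompletion.isAdicComplete hfg
  obtain ⟨e⟩ := powerSeries_equiv g.toRingHom
    (algebraMap (Polynomial k) (AdicCompletion (Ideal.span {p}) (Polynomial k)) p) (fun s => by
      refine ⟨AdicCompletion.evalOneₐ _ s, ?_⟩
      rw [← hker]
      change AdicCompletion.evalOneₐ _ (s - g _) = 0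
      rw [map_sub, sub_eq_zero]
      exact (DFunLike.congr_fun hg _).symm) (fun n h => by
      rw [← map_pow] at h
      have h1 := congrArg (AdicCompletion.evalₐ (Ideal.span {p}) (n+1)) h
      rw [map_zero, AlgHom.commutes] at h1
      have h2 := Ideal.Quotient.eq_zero_iff_mem.1 h1
      rw [Ideal.span_singleton_pow, Ideal.mem_span_singleton,
        pow_dvd_pow_iff hp.ne_zero hp.not_isUnit] at h2
      omega)
  exact ⟨e.symm⟩

theorem stmt_3 (k : Type*) [Field k] (p : Polynomial k) (hp : Irreducible p) :
    Nonempty (AdicCompletion (Ideal.span {p}) (Polynomial k) ≃+*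
      PowerSeries (Polynomial k ⧸ Ideal.span {p})) := by
  obtain ⟨q, hq⟩ := CharP.exists k
  rcases CharP.char_is_prime_or_zero k q with h | rfl
  · have : Fact q.Prime := ⟨h⟩
    let : Algebra (ZMod q) k := ZMod.algebra k q
    exact main_aux (ZMod q) k p hp
  · have : CharZero k := CharP.charP_to_charZero k
    exact main_aux ℚ k p hp
end

section
/- Let k be a field and p(x) ∈ k[x] an irreducible polynomial. Let M_p be the Prüfer k[x]-module at p, namely the quotient k[x][1/p(x)] / k[x] of the localization of k[x] away from p(x) by the image of k[x]. Then the endomorphism ring End_{k[x]}(M_p) is isomorphic as a ring to the formal power series ring k_{p(x)}[[t]] in one variable t over the field k_{p(x)} := k[x]/(p(x)). -/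
/-- The Prüfer `k[x]`-module at an irreducible polynomial `p`: the quotient
`k[x][1/p] / k[x]` of the localization of `k[x]` away from `p` by the image of `k[x]`. -/
abbrev PruferModule (k : Type*) [Field k] (p : Polynomial k) :=
  Localization.Away p ⧸
    LinearMap.range (Algebra.linearMap (Polynomial k) (Localization.Away p))

theorem h1_iff (K F : Type*) [Field K] [Field F] [Algebra K F] :
    Subsingleton (Algebra.H1Cotangent K F) ↔
    ∀ x : MvPolynomial F K, MvPolynomial.aeval (id : F → F) x = 0 →
      (∀ i, MvPolynomial.aeval (id : F → F) (MvPolynomial.pderiv i x) = 0) →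
      x ∈ (RingHom.ker (MvPolynomial.aeval (R := K) (id : F → F))) ^ 2 := by
  let P := Algebra.Generators.self K F
  have key : ∀ x : P.toExtension.ker, P.toExtension.cotangentComplex (.mk x) = 0 ↔
      ∀ i, MvPolynomial.aeval (id : F → F) (MvPolynomial.pderiv i x.1) = 0 := by
    intro x
    rw [Algebra.Extension.cotangentComplex_mk, ← P.cotangentSpaceBasis.repr.map_eq_zero_iff,
      Finsupp.ext_iff]
    refine forall_congr' fun i => ?_
    rw [P.cotangentSpaceBasis_repr_one_tmul]
    rfl
  have hker : ∀ x : MvPolynomial F K, x ∈ P.toExtension.ker ↔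
      MvPolynomial.aeval (id : F → F) x = 0 := fun x => Iff.rfl
  have hk2 : P.toExtension.ker = RingHom.ker (MvPolynomial.aeval (R := K) (id : F → F)) := rfl
  change Subsingleton P.toExtension.H1Cotangent ↔ _
  rw [Algebra.Extension.subsingleton_h1Cotangent, injective_iff_map_eq_zero]
  constructor
  · intro h x hx hd
    have := h (.mk ⟨x, (hker x).2 hx⟩) ((key _).2 hd)
    exact (Algebra.Extension.Cotangent.mk_eq_zero_iff _).1 this
  · intro h a ha
    obtain ⟨x, rfl⟩ := Algebra.Extension.Cotangent.mk_surjective a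
    exact (Algebra.Extension.Cotangent.mk_eq_zero_iff _).2
      (h x.1 ((hker _).1 x.2) ((key _).1 ha))

theorem smooth_field (K F : Type*) [Field K] [Field F] [Algebra K F] [PerfectField K] :
    Algebra.FormallySmooth K F := by
  refine ⟨inferInstance, (h1_iff K F).2 fun x hx hd => ?_⟩
  classical
  obtain ⟨E, hE, hvars⟩ : ∃ E : IntermediateField K F, Algebra.EssFiniteType K E ∧
      (x.vars : Set F) ⊆ E :=
    ⟨IntermediateField.adjoin K (x.vars : Set F),
      IntermediateField.essFiniteType_iff.2 ⟨x.vars, rfl⟩, IntermediateField.subset_adjoin K _⟩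
  have hs : Algebra.FormallySmooth K E := inferInstance
  have h1 := (h1_iff K E).1 hs.subsingleton_h1Cotangent
  obtain ⟨y, rfl⟩ := MvPolynomial.exists_rename_eq_of_vars_subset_range x
    (Subtype.val : E → F) Subtype.val_injective (fun i hi => by
      simpa using hvars hi)
  have hcomm : ∀ z : MvPolynomial E K, MvPolynomial.aeval (id : F → F)
      (MvPolynomial.rename (Subtype.val : E → F) z) =
      algebraMap E F (MvPolynomial.aeval (id : E → E) z) := by
    intro z
    rw [MvPolynomial.aeval_rename, ← MvPolynomial.aeval_algebraMap_apply]
    rfl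
  have hmem := h1 y (by
      rw [hcomm] at hx; exact (map_eq_zero _).1 hx) (fun i => by
      have := hd i
      rw [MvPolynomial.pderiv_rename Subtype.val_injective, hcomm] at this
      exact (map_eq_zero _).1 this)
  have := Ideal.mem_map_of_mem (MvPolynomial.rename (R := K) (Subtype.val : E → F)) hmem
  rw [Ideal.map_pow] at this
  refine Ideal.pow_right_mono (Ideal.map_le_iff_le_comap.2 fun z hz => ?_) 2 this
  rw [Ideal.mem_comap, RingHom.mem_ker, hcomm, RingHom.mem_ker.1 hz, map_zero]

theorem eval2_trunc {F Q : Type*} [CommRing F] [CommRing Q] (τ : F →+* Q) (π : Q) (n : ℕ)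
    (hπ : π ^ n = 0) (q : Polynomial F) :
    Polynomial.eval₂ τ π (PowerSeries.trunc n (q : PowerSeries F)) = Polynomial.eval₂ τ π q := by
  have h : (Polynomial.X ^ n : Polynomial F) ∣ q - PowerSeries.trunc n (q : PowerSeries F) := by
    rw [Polynomial.X_pow_dvd_iff]
    intro d hd
    rw [Polynomial.coeff_sub, PowerSeries.coeff_trunc, if_pos hd, Polynomial.coeff_coe, sub_self]
  obtain ⟨r, hr⟩ := h
  have := congrArg (Polynomial.eval₂ τ π) hr
  rw [Polynomial.eval₂_sub, Polynomial.eval₂_mul, Polynomial.eval₂_pow, Polynomial.eval₂_X, hπ,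
    zero_mul, sub_eq_zero] at this
  exact this.symm

/-- evaluation of power series at a nilpotent element -/
noncomputable def rho {F Q : Type*} [CommRing F] [CommRing Q] (τ : F →+* Q) (π : Q) (n : ℕ)
    (hπ : π ^ n = 0) : PowerSeries F →+* Q where
  toFun f := Polynomial.eval₂ τ π (PowerSeries.trunc n f)
  map_zero' := by simp
  map_one' := by
    rw [← Polynomial.coe_one, eval2_trunc τ π n hπ, Polynomial.eval₂_one]
  map_add' f g := by rw [map_add, Polynomial.eval₂_add]
  map_mul' f g := by
    rw [← PowerSeries.trunc_trunc_mul_trunc, ← Polynomial.coe_mul, eval2_trunc τ π n hπ,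
      Polynomial.eval₂_mul]

section
variable {F Q : Type*} [Field F] [CommRing Q] (τ : F →+* Q) (π : Q) (n : ℕ) (hπ : π ^ n = 0)

theorem rho_apply (f : PowerSeries F) :
    rho τ π n hπ f = Polynomial.eval₂ τ π (PowerSeries.trunc n f) := rfl

theorem rho_coe (f : Polynomial F) :
    rho τ π n hπ f = Polynomial.eval₂ τ π f := eval2_trunc τ π n hπ f

theorem rho_X : rho τ π n hπ PowerSeries.X = π := by
  rw [← Polynomial.coe_X, rho_coe, Polynomial.eval₂_X]

theorem rho_C (c : F) : rho τ π n hπ (PowerSeries.C c) = τ c := by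
  rw [← Polynomial.coe_C, rho_coe, Polynomial.eval₂_C]

theorem rho_ker (hπ' : ∀ d < n, π ^ d ≠ 0) (f : PowerSeries F) :
    rho τ π n hπ f = 0 ↔ PowerSeries.X ^ n ∣ f := by
  constructor
  · intro h
    rw [PowerSeries.X_pow_dvd_iff]
    by_contra! hc
    have hf : f ≠ 0 := by
      rintro rfl; obtain ⟨m, _, hm⟩ := hc; simp at hm
    obtain ⟨m, hm, hcm⟩ := hc
    have ho := PowerSeries.order_le m hcm
    have hlt : f.order.toNat < n := by
      refine lt_of_le_of_lt ?_ hm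
      exact ENat.toNat_le_of_le_natCast ho
    have hu := (PowerSeries.isUnit_divided_by_X_pow_order hf).map (rho τ π n hπ)
    rw [← PowerSeries.X_pow_order_mul_divXPowOrder (f := f), map_mul, map_pow, rho_X,
      hu.mul_left_eq_zero] at h
    exact hπ' _ hlt h
  · rintro ⟨g, rfl⟩
    rw [map_mul, map_pow, rho_X, hπ, zero_mul]

theorem rho_surj (hτ : ∀ a : Q, ∃ c r, a = τ c + π * r) : Function.Surjective (rho τ π n hπ) := by
  have key : ∀ j : ℕ, ∀ a : Q, ∃ f r, a = rho τ π n hπ f + π ^ j * r := by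
    intro j
    induction j with
    | zero => intro a; exact ⟨0, a, by simp⟩
    | succ j ih =>
      intro a
      obtain ⟨f, r, hr⟩ := ih a
      obtain ⟨c, s, hs⟩ := hτ r
      refine ⟨f + PowerSeries.X ^ j * PowerSeries.C c, s, ?_⟩
      rw [map_add, map_mul, map_pow, rho_X, rho_C, hr, hs]
      ring
  intro a
  obtain ⟨f, r, hr⟩ := key n a
  exact ⟨f, by rw [hr, hπ, zero_mul, add_zero]⟩

theorem rho_trunc (f : PowerSeries F) (m : ℕ) (hm : n ≤ m) :
    rho τ π n hπ (PowerSeries.trunc m f) = rho τ π n hπ f := by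
  rw [rho_apply, PowerSeries.trunc_trunc_of_le _ hm, rho_apply]
end

theorem adic_factor {R : Type*} [CommRing R] (I : Ideal R) {m n : ℕ} (h : m ≤ n)
    (a : AdicCompletion I R) :
    Ideal.Quotient.factorPow I h (AdicCompletion.evalₐ I n a) = AdicCompletion.evalₐ I m a := by
  induction a using AdicCompletion.induction_on with
  | _ a =>
  simp only [AdicCompletion.evalₐ_mk]
  exact AdicCompletion.Ideal.mk_eq_mk I h a

theorem adic_equiv {R F : Type*} [CommRing R] [IsDomain R] [Field F] (p : R) (hp0 : p ≠ 0)
    (hpu : ¬ IsUnit p) (I : Ideal R) (hI : I = Ideal.span {p}) (e : F ≃+* R ⧸ I)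
    (σ : F →+* AdicCompletion I R)
    (hσ : ∀ c, AdicCompletion.evalOneₐ I (σ c) = e c) :
    Nonempty (PowerSeries F ≃+* AdicCompletion I R) := by
  have mk0 : ∀ (n : ℕ) (x : R), Ideal.Quotient.mk (I ^ n) x = 0 ↔ p ^ n ∣ x := fun n x => by
    rw [Ideal.Quotient.eq_zero_iff_mem, hI, Ideal.span_singleton_pow, Ideal.mem_span_singleton]
  let π : ∀ n, R ⧸ I ^ n := fun n => Ideal.Quotient.mk (I ^ n) p
  have hπ : ∀ n, π n ^ n = 0 := fun n => by
    rw [← map_pow, mk0]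
  have hπ' : ∀ n, ∀ d < n, π n ^ d ≠ 0 := fun n d hd h => by
    rw [← map_pow, mk0, pow_dvd_pow_iff hp0 hpu] at h
    omega
  let τ : ∀ n, F →+* R ⧸ I ^ n := fun n => (AdicCompletion.evalₐ I n : _ →+* _).comp σ
  have hτ : ∀ n, ∀ a, ∃ c r, a = τ n c + π n * r := by
    intro n a
    obtain ⟨a, rfl⟩ := Ideal.Quotient.mk_surjective a
    rcases Nat.eq_zero_or_pos n with rfl | hn
    · refine ⟨0, 0, ?_⟩
      rw [map_zero, mul_zero, add_zero, mk0, pow_zero]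
      exact one_dvd _
    · let c := e.symm (Ideal.Quotient.mk I a)
      obtain ⟨b, hb⟩ := Ideal.Quotient.mk_surjective (τ n c)
      have h1 : Ideal.Quotient.mk I b = Ideal.Quotient.mk I a := by
        have h2 := hσ c
        rw [← AdicCompletion.factorₐ_evalₐ_one, ← adic_factor I hn, e.apply_symm_apply] at h2
        change _ = AdicCompletion.evalₐ I n (σ c) at hb
        rw [← hb] at h2
        exact h2
      rw [Ideal.Quotient.eq, hI, Ideal.mem_span_singleton] at h1
      obtain ⟨r, hr⟩ := h1
      refine ⟨c, Ideal.Quotient.mk _ (-r), ?_⟩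
      rw [← hb, ← map_mul, ← map_add]
      congr 1
      linear_combination -hr
  let ρ : ∀ n, PowerSeries F →+* R ⧸ I ^ n := fun n => rho (τ n) (π n) n (hπ n)
  have hρ : ∀ {m n : ℕ} (hle : m ≤ n), (Ideal.Quotient.factorPow I hle).comp (ρ n) = ρ m := by
    intro m n hle
    ext f
    change Ideal.Quotient.factorPow I hle (ρ n f) = ρ m f
    rw [show ρ m f = ρ m (PowerSeries.trunc n f) from (rho_trunc _ _ _ _ _ _ hle).symm]
    change Ideal.Quotient.factorPow I hle (rho (τ n) (π n) n (hπ n) f) =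
      rho (τ m) (π m) m (hπ m) _
    rw [rho_coe, rho_apply, Polynomial.hom_eval₂]
    congr 1
    ext c
    exact adic_factor I hle (σ c)
  refine ⟨RingEquiv.ofBijective (AdicCompletion.liftRingHom I ρ hρ) ⟨?_, ?_⟩⟩
  · rw [injective_iff_map_eq_zero]
    intro f hf
    ext d
    have h1 := AdicCompletion.evalₐ_liftRingHom I ρ hρ (d+1) f
    rw [hf, map_zero] at h1
    have h2 := (rho_ker _ _ _ (hπ _) (hπ' _) f).1 h1.symm
    rw [PowerSeries.X_pow_dvd_iff] at h2
    simpa using h2 d (Nat.lt_succ_self d)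
  · intro a
    have hs : ∀ n, ∃ f, ρ n f = AdicCompletion.evalₐ I n a := fun n =>
      rho_surj _ _ _ (hπ n) (hτ n) _
    choose b hb using hs
    have hbb : ∀ m n, m ≤ n → ∀ d < m, PowerSeries.coeff d (b n) = PowerSeries.coeff d (b m) := by
      intro m n hmn
      have h1 : ρ m (b n - b m) = 0 := by
        rw [map_sub, hb, ← hρ hmn, RingHom.comp_apply, hb, adic_factor, sub_self]
      have h2 := (rho_ker _ _ _ (hπ _) (hπ' _) _).1 h1
      rw [PowerSeries.X_pow_dvd_iff] at h2
      intro d hd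
      have := h2 d hd
      rwa [map_sub, sub_eq_zero] at this
    refine ⟨PowerSeries.mk fun d => PowerSeries.coeff d (b (d+1)), ?_⟩
    apply AdicCompletion.ext_evalₐ
    intro n
    rw [AdicCompletion.evalₐ_liftRingHom, ← hb n, ← sub_eq_zero, ← map_sub]
    refine (rho_ker _ _ _ (hπ _) (hπ' _) _).2 ?_
    rw [PowerSeries.X_pow_dvd_iff]
    intro d hd
    rw [map_sub, PowerSeries.coeff_mk, hbb (d+1) n hd d (Nat.lt_succ_self d), sub_self]
theorem end_equiv {R M : Type*} [CommRing R] [AddCommGroup M] [Module R M] (p : R) (u : ℕ → M)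
    (h1 : ∀ n f, f • u n = 0 ↔ p ^ n ∣ f)
    (h2 : ∀ n m, p ^ n • m = 0 → ∃ f : R, m = f • u n)
    (h3 : ∀ m : M, ∃ n, p ^ n • m = 0)
    (h4 : ∀ m n, m ≤ n → ∃ c : R, u m = c • u n) :
    Nonempty (Module.End R M ≃+* AdicCompletion (Ideal.span {p}) R) := by
  set I := Ideal.span {p} with hI
  have mk0 : ∀ (n : ℕ) (x y : R), Ideal.Quotient.mk (I ^ n) x = Ideal.Quotient.mk (I ^ n) y ↔
      p ^ n ∣ x - y := fun n x y => by
    rw [Ideal.Quotient.eq, hI, Ideal.span_singleton_pow, Ideal.mem_span_singleton]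
  have hex : ∀ n (φ : Module.End R M), ∃ f : R, φ (u n) = f • u n := fun n φ =>
    h2 n _ (by rw [← map_smul, (h1 n _).2 dvd_rfl, map_zero])
  choose a ha using hex
  have huniq : ∀ n φ f, φ (u n) = f • u n →
      Ideal.Quotient.mk (I ^ n) (a n φ) = Ideal.Quotient.mk (I ^ n) f := by
    intro n φ f hf
    rw [mk0, ← h1, sub_smul, ← ha, hf, sub_self]
  let α : ∀ n, Module.End R M →+* R ⧸ I ^ n := fun n =>
    { toFun := fun φ => Ideal.Quotient.mk (I ^ n) (a n φ)
      map_zero' := by rw [huniq n 0 0 (by simp), map_zero]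
      map_one' := by rw [huniq n 1 1 (by simp), map_one]
      map_add' := fun φ ψ => by
        rw [huniq n (φ + ψ) (a n φ + a n ψ), map_add]
        rw [LinearMap.add_apply, add_smul, ha, ha]
      map_mul' := fun φ ψ => by
        rw [huniq n (φ * ψ) (a n φ * a n ψ), map_mul]
        rw [Module.End.mul_apply, ha n ψ, map_smul, ha n φ, smul_smul, mul_comm] }
  have hα : ∀ {m n : ℕ} (hle : m ≤ n), (Ideal.Quotient.factorPow I hle).comp (α n) = α m := by
    intro m n hle
    ext φ
    change Ideal.Quotient.mk (I ^ m) (a n φ) = Ideal.Quotient.mk (I ^ m) (a m φ)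
    symm
    apply huniq
    obtain ⟨c, hc⟩ := h4 m n hle
    rw [hc, map_smul, ha, smul_comm]
  refine ⟨RingEquiv.ofBijective (AdicCompletion.liftRingHom I α hα) ⟨?_, ?_⟩⟩
  · rw [injective_iff_map_eq_zero]
    intro φ hφ
    ext m
    obtain ⟨n, hn⟩ := h3 m
    obtain ⟨f, rfl⟩ := h2 n m hn
    have e1 := AdicCompletion.evalₐ_liftRingHom I α hα n φ
    rw [hφ, map_zero] at e1
    have e2 : Ideal.Quotient.mk (I ^ n) (a n φ) = Ideal.Quotient.mk (I ^ n) 0 := by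
      rw [map_zero]; exact e1.symm
    rw [mk0, sub_zero, ← h1] at e2
    rw [map_smul, ha, e2]
    simp
  · intro x
    have hs : ∀ n, ∃ f, Ideal.Quotient.mk (I ^ n) f = AdicCompletion.evalₐ I n x := fun n =>
      Ideal.Quotient.mk_surjective _
    choose b hb using hs
    have hbb : ∀ m n, m ≤ n → p ^ m ∣ b n - b m := by
      intro m n hmn
      rw [← mk0, hb m, ← adic_factor I hmn, ← hb n]
      rfl
    have hact : ∀ m n l, p ^ n • m = (0 : M) → n ≤ l → b l • m = b n • m := by
      intro m n l hm hnl
      obtain ⟨c, hc⟩ := hbb n l hnl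
      rw [← sub_eq_zero, ← sub_smul, hc, mul_comm, mul_smul, hm, smul_zero]
    choose N hN using h3
    have hNl : ∀ m l, p ^ l • m = 0 → b (N m) • m = b l • m := by
      intro m l hl
      rcases le_total l (N m) with h | h
      · exact hact _ _ _ hl h
      · exact (hact _ _ _ (hN m) h).symm
    have hle : ∀ (m : M) n l, p ^ n • m = 0 → n ≤ l → p ^ l • m = 0 := by
      intro m n l hn hnl
      obtain ⟨c, hc⟩ := pow_dvd_pow p hnl
      rw [hc, mul_comm, mul_smul, hn, smul_zero]
    let φ : Module.End R M :=
      { toFun := fun m => b (N m) • m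
        map_add' := fun m m' => by
          have e1 := hle m _ _ (hN m) (le_max_left (N m) (N m'))
          have e2 := hle m' _ _ (hN m') (le_max_right (N m) (N m'))
          rw [hNl m _ e1, hNl m' _ e2, hNl (m + m') (max (N m) (N m')), smul_add]
          rw [smul_add, e1, e2, add_zero]
        map_smul' := fun r m => by
          rw [hNl (r • m) (N m) (by rw [smul_comm, hN, smul_zero]), smul_comm]
          rfl }
    refine ⟨φ, ?_⟩
    apply AdicCompletion.ext_evalₐ
    intro n
    rw [AdicCompletion.evalₐ_liftRingHom, ← hb n]
    exact huniq n φ (b n) (hNl _ _ ((h1 n _).2 dvd_rfl))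
theorem prufer_end (k : Type*) [Field k] (p : Polynomial k) (hp : Irreducible p) :
    Nonempty (Module.End (Polynomial k) (PruferModule k p) ≃+*
      AdicCompletion (Ideal.span {p}) (Polynomial k)) := by
  let L := Localization.Away p
  let v : L := IsLocalization.Away.invSelf p
  let ι := algebraMap (Polynomial k) L
  have hv : ι p * v = 1 := IsLocalization.Away.mul_invSelf p
  have hvn : ∀ n, ι p ^ n * v ^ n = 1 := fun n => by rw [← mul_pow, hv, one_pow]
  have hinj : Function.Injective ι :=
    IsLocalization.injective L (powers_le_nonZeroDivisors_of_noZeroDivisors hp.ne_zero)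
  let W := LinearMap.range (Algebra.linearMap (Polynomial k) L)
  have hW : ∀ y : L, W.mkQ y = 0 ↔ ∃ g, ι g = y := fun y => by
    rw [Submodule.mkQ_apply, Submodule.Quotient.mk_eq_zero]
    exact Iff.rfl
  refine end_equiv p (fun n => W.mkQ (v ^ n)) ?_ ?_ ?_ ?_
  · intro n f
    rw [← map_smul, hW, Algebra.smul_def]
    constructor
    · rintro ⟨g, hg⟩
      refine ⟨g, hinj ?_⟩
      rw [map_mul, map_pow, hg]
      change ι f = ι p ^ n * (ι f * v ^ n)
      linear_combination (-ι f) * hvn n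
    · rintro ⟨g, rfl⟩
      refine ⟨g, ?_⟩
      change ι g = ι (p ^ n * g) * v ^ n
      rw [map_mul, map_pow]
      linear_combination (-ι g) * hvn n
  · intro n m hm
    obtain ⟨y, rfl⟩ := W.mkQ_surjective m
    rw [← map_smul, hW, Algebra.smul_def] at hm
    obtain ⟨g, hg⟩ := hm
    refine ⟨g, ?_⟩
    rw [← map_smul, Algebra.smul_def]
    congr 1
    change ι g = ι (p ^ n) * y at hg
    change y = ι g * v ^ n
    rw [hg, map_pow]
    linear_combination (-y) * hvn n
  · intro m
    obtain ⟨y, rfl⟩ := W.mkQ_surjective m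
    obtain ⟨n, a, ha⟩ := IsLocalization.Away.surj p y
    refine ⟨n, ?_⟩
    rw [← map_smul, hW, Algebra.smul_def]
    refine ⟨a, ?_⟩
    rw [map_pow, mul_comm]
    exact ha.symm
  · intro m n hmn
    refine ⟨p ^ (n - m), ?_⟩
    rw [← map_smul, Algebra.smul_def]
    congr 1
    change v ^ m = ι (p ^ (n - m)) * v ^ n
    rw [map_pow]
    obtain ⟨d, rfl⟩ := Nat.exists_eq_add_of_le hmn
    rw [Nat.add_sub_cancel_left, pow_add]
    linear_combination (-v ^ m) * hvn d

theorem coeff_field {F S : Type*} [Field F] [CommRing S] (I : Ideal S) (e : F →+* S ⧸ I)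
    (k : Type*) [Field k] (j : k →+* S) [Nontrivial (S ⧸ I)] :
    ∃ σ : F →+* AdicCompletion I S, ∀ c, AdicCompletion.evalOneₐ I (σ c) = e c := by
  have main : ∀ (K : Type) [Field K] [PerfectField K] (i : K →+* k) (l : K →+* F)
     (h : (Ideal.Quotient.mk I).comp (j.comp i) = e.comp l),
     ∃ σ : F →+* AdicCompletion I S, ∀ c, AdicCompletion.evalOneₐ I (σ c) = e c := by
    intro K _ _ i l h
    let := l.toAlgebra
    let : Algebra K S := (j.comp i).toAlgebra
    have := smooth_field K F
    let e' : F →ₐ[K] S ⧸ I := { e with commutes' := fun c => (RingHom.congr_fun h c).symm }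
    obtain ⟨g, hg⟩ := Algebra.FormallySmooth.exists_adicCompletionEvalOneₐ_comp_eq e'
    exact ⟨g.toRingHom, fun c => DFunLike.congr_fun hg c⟩
  obtain ⟨q, hq⟩ := CharP.exists k
  have hqF : CharP F q := by
    have := charP_of_injective_ringHom ((Ideal.Quotient.mk I).comp j).injective q
    exact e.charP e.injective q
  rcases CharP.char_is_prime_or_zero k q with hprime | rfl
  · have := Fact.mk hprime
    exact main (ZMod q) (ZMod.castHom dvd_rfl k) (ZMod.castHom dvd_rfl F) (Subsingleton.elim _ _)
  · have := CharP.charP_to_charZero k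
    have := CharP.charP_to_charZero F
    refine main ℚ (algebraMap ℚ k) (algebraMap ℚ F) (RingHom.ext_rat _ _)

/-- For a field `k` and an irreducible polynomial `p ∈ k[x]`, the
endomorphism ring of the Prüfer module `k[x][1/p]/k[x]` is isomorphic as a ring to the
formal power series ring in one variable over the field `k[x]/(p)`. -/
theorem stmt_5 (k : Type*) [Field k] (p : Polynomial k) (hp : Irreducible p) :
    Nonempty (Module.End (Polynomial k) (PruferModule k p) ≃+*
      PowerSeries (Polynomial k ⧸ Ideal.span {p})) := by
  obtain ⟨e1⟩ := prufer_end k p hp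
  have : (Ideal.span {p}).IsMaximal := PrincipalIdealRing.isMaximal_of_irreducible hp
  let := Ideal.Quotient.field (Ideal.span {p})
  obtain ⟨σ, hσ⟩ := coeff_field (Ideal.span {p}) (RingHom.id (Polynomial k ⧸ Ideal.span {p}))
    k Polynomial.C
  obtain ⟨e2⟩ := adic_equiv p hp.ne_zero hp.not_isUnit _ rfl (RingEquiv.refl _) σ hσ
  exact ⟨e1.trans e2.symm⟩
end

section
/- Let k be a field and let R be the Kronecker algebra, realized as the subring of the 2×2 matrix ring M_2(k[x]) over the polynomial ring k[x] consisting of all matrices of the form ((a, c + d·x), (0, b)) with a, b, c, d ∈ k, i.e. upper triangular matrices whose diagonal entries are constants and whose (1,2)-entry is a polynomial of degree at most 1. Then the inclusion R ↪ M_2(k[x]) is an injective epimorphism in the category of rings; that is, any two ring homomorphisms from M_2(k[x]) to a ring T that agree on R are equal. -/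
open Polynomial

/-- The Kronecker algebra realized as the subring of `M_2(k[x])` of matrices
`((a, c + d·x), (0, b))` with `a, b, c, d ∈ k`. -/
noncomputable def Kronecker (k : Type*) [Field k] :
    Subring (Matrix (Fin 2) (Fin 2) (Polynomial k)) where
  carrier := {A | ∃ a b c d : k,
    A 0 0 = C a ∧ A 1 1 = C b ∧ A 0 1 = C c + C d * X ∧ A 1 0 = 0}
  mul_mem' := by
    rintro A B ⟨a, b, c, d, hA00, hA11, hA01, hA10⟩ ⟨a', b', c', d', hB00, hB11, hB01, hB10⟩
    refine ⟨a * a', b * b', a * c' + c * b', a * d' + d * b', ?_, ?_, ?_, ?_⟩ <;>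
      simp only [Matrix.mul_apply, Fin.sum_univ_two, hA00, hA11, hA01, hA10,
        hB00, hB11, hB01, hB10] <;> ring_nf <;> simp [map_mul, map_add] <;> ring
  one_mem' := by
    refine ⟨1, 1, 0, 0, ?_, ?_, ?_, ?_⟩ <;> simp [Matrix.one_apply]
  add_mem' := by
    rintro A B ⟨a, b, c, d, hA00, hA11, hA01, hA10⟩ ⟨a', b', c', d', hB00, hB11, hB01, hB10⟩
    refine ⟨a + a', b + b', c + c', d + d', ?_, ?_, ?_, ?_⟩ <;>
      simp only [Matrix.add_apply, hA00, hA11, hA01, hA10, hB00, hB11, hB01, hB10,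
        map_add] <;> ring
  zero_mem' := ⟨0, 0, 0, 0, by simp, by simp, by simp, rfl⟩
  neg_mem' := by
    rintro A ⟨a, b, c, d, hA00, hA11, hA01, hA10⟩
    refine ⟨-a, -b, -c, -d, ?_, ?_, ?_, ?_⟩ <;>
      simp only [Matrix.neg_apply, hA00, hA11, hA01, hA10, map_neg, neg_zero] <;> ring
  
/-- **Statement 9.** For a field `k`, the inclusion of the Kronecker algebra into
`M_2(k[x])` is an injective epimorphism in the category of rings: the inclusion is
injective, and any two ring homomorphisms out of `M_2(k[x])` that agree on the Kronecker
algebra are equal. -/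
theorem stmt_9 (k : Type*) [Field k] :
    Function.Injective (Kronecker k).subtype ∧
    ∀ (T : Type*) [Ring T] (g h : Matrix (Fin 2) (Fin 2) (Polynomial k) →+* T),
      (∀ A ∈ Kronecker k, g A = h A) → g = h := by
  refine ⟨Subtype.val_injective, ?_⟩
  intro T _ g h hgh
  have k00 : ∀ a : k, g (Matrix.single 0 0 (C a)) = h (Matrix.single 0 0 (C a)) := fun a =>
    hgh _ ⟨a, 0, 0, 0, by simp, by simp, by simp, by simp⟩
  have k11 : g (Matrix.single 1 1 1) = h (Matrix.single 1 1 1) :=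
    hgh _ ⟨0, 1, 0, 0, by simp, by simp, by simp, by simp⟩
  have k01 : g (Matrix.single 0 1 1) = h (Matrix.single 0 1 1) :=
    hgh _ ⟨0, 0, 1, 0, by simp, by simp, by simp, by simp⟩
  have k01X : g (Matrix.single 0 1 X) = h (Matrix.single 0 1 X) :=
    hgh _ ⟨0, 0, 0, 1, by simp, by simp, by simp, by simp⟩
  have k10 : g (Matrix.single 1 0 1) = h (Matrix.single 1 0 1) := by
    have e1 : (Matrix.single 1 0 1 : Matrix (Fin 2) (Fin 2) k[X])
        = Matrix.single 1 0 1 * Matrix.single 0 0 (C 1) := by simp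
    have e2 : (Matrix.single 0 0 (C 1) : Matrix (Fin 2) (Fin 2) k[X])
        = Matrix.single 0 1 1 * Matrix.single 1 0 1 := by simp
    have e3 : (Matrix.single 1 0 1 : Matrix (Fin 2) (Fin 2) k[X]) * Matrix.single 0 1 1
        = Matrix.single 1 1 1 := by simp
    have e4 : (Matrix.single 1 1 1 : Matrix (Fin 2) (Fin 2) k[X]) * Matrix.single 1 0 1
        = Matrix.single 1 0 1 := by simp
    rw [e1, map_mul, k00, e2, map_mul h, ← k01, ← mul_assoc, ← map_mul g, e3, k11, ← map_mul h, e4,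
      ← e2, ← e1]
  have k00X : g (Matrix.single 0 0 X) = h (Matrix.single 0 0 X) := by
    have e : (Matrix.single 0 0 X : Matrix (Fin 2) (Fin 2) k[X])
        = Matrix.single 0 1 X * Matrix.single 1 0 1 := by simp
    rw [e, map_mul, map_mul, k01X, k10]
  have kp : ∀ p : k[X], g (Matrix.single 0 0 p) = h (Matrix.single 0 0 p) := by
    intro p
    induction p using Polynomial.induction_on with
    | C a => exact k00 a
    | add p q hp hq => rw [Matrix.single_add, map_add, map_add, hp, hq]
    | monomial n a ih =>
      have e : (Matrix.single 0 0 (C a * X ^ (n + 1)) : Matrix (Fin 2) (Fin 2) k[X])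
          = Matrix.single 0 0 (C a * X ^ n) * Matrix.single 0 0 X := by
        simp [pow_succ, mul_assoc]
      rw [e, map_mul, map_mul, ih, k00X]
  have kl : ∀ i : Fin 2, g (Matrix.single i 0 1) = h (Matrix.single i 0 1) := by
    intro i
    fin_cases i
    · exact kp 1
    · exact k10
  have kr : ∀ i : Fin 2, g (Matrix.single 0 i 1) = h (Matrix.single 0 i 1) := by
    intro i
    fin_cases i
    · exact kp 1
    · exact k01
  ext A
  rw [Matrix.matrix_eq_sum_single A]
  simp only [map_sum]
  refine Finset.sum_congr rfl fun i _ => Finset.sum_congr rfl fun j _ => ?_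
  have e : Matrix.single i j (A i j)
      = Matrix.single i 0 1 * Matrix.single 0 0 (A i j) * Matrix.single 0 j 1 := by simp
  rw [e, map_mul, map_mul, map_mul, map_mul, kl, kp, kr]
end
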